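/- arXiv:math/0608375 — 2 statements merged into one kernel-verified Lean document; each statement's English description precedes it below -/
import Mathlib

section
/- Let μ : [0,∞) → [0,∞) be nonincreasing with ∫₀^t μ(s) ds ≤ K·log(1+t) for all t > 0 and some K > 0, let λ(u) = |{s ≥ 0 : μ(s) > u}| (Lebesgue measure), let C > 0 and A ∈ ℝ. Then the following are equivalent: (a) lim_{t→∞} (1/log(1+t))∫₀^t μ(s) ds = A; (b) lim_{t→∞} (1/log(1+t))∫₀^{λ(1/t)} μ(s) ds = A; (c) lim_{t→∞} (1/log(1+t))∫₀^{C·t·log t} μ(s) ds = A. -/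
open Filter MeasureTheory

/-!
Put `F t = ∫₀^t μ` and `G t = ∫₀^{λ(1/t)} μ`. Outside `[0, λ(1/t)]` the function `μ` is at most
`1/t`, so `F t - 1 ≤ G t`; hence (b), just like (a), forces `F = O(log)`. Since `s μ(s) ≤ F s`, this
gives `μ(t log² t) ≤ 1/t` for large `t`, that is `λ(1/t) ≤ t log² t`, so
`F t - 1 ≤ G t ≤ F (t log² t)`. The function `t ↦ F (C t log t)` lies between the same bounds.
Such a sandwich determines the limit of the logarithmic averages, because the substitutions
`t ↦ t log² t` and `t ↦ t / log² t` change `log (1 + t)` only by a factor tending to `1`.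
-/

open Asymptotics Set Topology

section LogarithmicScale

lemma tendsto_log_one_add_atTop : Tendsto (fun t : ℝ => Real.log (1 + t)) atTop atTop :=
  Real.tendsto_log_atTop.comp (tendsto_atTop_add_const_left _ 1 tendsto_id)

lemma isEquivalent_log_one_add : (fun t : ℝ => Real.log (1 + t)) ~[atTop] Real.log := by
  have hdiff : Tendsto (fun t : ℝ => Real.log (1 + t) - Real.log t) atTop (𝓝 0) := by
    simpa only [add_comm] using Real.tendsto_log_comp_add_sub_log 1
  exact ((isLittleO_one_iff ℝ).2 hdiff).trans
    (isLittleO_const_left.2 (.inr (tendsto_norm_atTop_atTop.comp Real.tendsto_log_atTop)))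

lemma isEquivalent_log_mul_log_zpow (n : ℤ) :
    (fun t : ℝ => Real.log (t * Real.log t ^ n)) ~[atTop] Real.log := by
  have hloglog : (fun t : ℝ => n * Real.log (Real.log t)) =o[atTop] Real.log :=
    (Real.isLittleO_log_id_atTop.comp_tendsto Real.tendsto_log_atTop).const_mul_left _
  refine hloglog.congr' ?_ .rfl
  filter_upwards [eventually_gt_atTop 1] with t ht
  have hlog : 0 < Real.log t := Real.log_pos ht
  simp [Real.log_mul (by positivity : t ≠ 0) (zpow_ne_zero n hlog.ne')]

lemma tendsto_mul_log_zpow_atTop (n : ℤ) :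
    Tendsto (fun t : ℝ => t * Real.log t ^ n) atTop atTop := by
  have hlog : Tendsto (fun t : ℝ => Real.log (t * Real.log t ^ n)) atTop atTop :=
    (isEquivalent_log_mul_log_zpow n).symm.tendsto_atTop Real.tendsto_log_atTop
  refine (Real.tendsto_exp_atTop.comp hlog).congr' ?_
  filter_upwards [eventually_gt_atTop 1] with t ht
  have : 0 < Real.log t := Real.log_pos ht
  exact Real.exp_log (by positivity)

lemma tendsto_div_log_pow_atTop (n : ℕ) :
    Tendsto (fun t : ℝ => t / Real.log t ^ n) atTop atTop := by
  simpa [div_eq_mul_inv] using tendsto_mul_log_zpow_atTop (-n)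

lemma isEquivalent_log_one_add_mul_log_zpow (n : ℤ) :
    (fun t : ℝ => Real.log (1 + t * Real.log t ^ n)) ~[atTop] fun t => Real.log (1 + t) :=
  ((isEquivalent_log_one_add.comp_tendsto (tendsto_mul_log_zpow_atTop n)).trans
    (isEquivalent_log_mul_log_zpow n)).trans isEquivalent_log_one_add.symm

lemma eventually_div_log_pow_mul_log_pow_le (n : ℕ) :
    ∀ᶠ t : ℝ in atTop, t / Real.log t ^ n * Real.log (t / Real.log t ^ n) ^ n ≤ t := by
  filter_upwards [eventually_gt_atTop 0, Real.tendsto_log_atTop.eventually_ge_atTop 1,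
    (tendsto_div_log_pow_atTop n).eventually_ge_atTop 1] with t ht hlog hdiv
  have hle : Real.log (t / Real.log t ^ n) ≤ Real.log t :=
    Real.log_le_log (by linarith) (div_le_self ht.le (one_le_pow₀ hlog))
  have hnonneg : 0 ≤ Real.log (t / Real.log t ^ n) := Real.log_nonneg hdiv
  calc t / Real.log t ^ n * Real.log (t / Real.log t ^ n) ^ n
      ≤ t / Real.log t ^ n * Real.log t ^ n := by gcongr
    _ = t := div_mul_cancel₀ _ (by positivity)

lemma tendsto_comp_div_of_isEquivalent {α 𝕜 : Type*} [NormedField 𝕜] {l : Filter α}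
    {F L : α → 𝕜} {φ : α → α} {A : 𝕜} (hF : Tendsto (fun t => F t / L t) l (𝓝 A))
    (hφ : Tendsto φ l l) (hL : (fun t => L (φ t)) ~[l] L) :
    Tendsto (fun t => F (φ t) / L t) l (𝓝 A) :=
  (IsEquivalent.refl.div hL).tendsto_nhds (hF.comp hφ)

lemma tendsto_div_log_iff_of_sandwich {F G : ℝ → ℝ} {c A : ℝ} (n : ℕ)
    (hF : MonotoneOn F (Ici 0)) (hlower : ∀ᶠ t in atTop, F t - c ≤ G t)
    (hupper : ∀ᶠ t in atTop, G t ≤ F (t * Real.log t ^ n)) :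
    Tendsto (fun t => F t / Real.log (1 + t)) atTop (𝓝 A) ↔
      Tendsto (fun t => G t / Real.log (1 + t)) atTop (𝓝 A) := by
  have hpos : ∀ᶠ t : ℝ in atTop, 0 < Real.log (1 + t) :=
    tendsto_log_one_add_atTop.eventually_gt_atTop 0
  have hconst : Tendsto (fun t : ℝ => c / Real.log (1 + t)) atTop (𝓝 0) :=
    tendsto_log_one_add_atTop.const_div_atTop c
  constructor <;> intro hlim
  · have hF_sub : Tendsto (fun t => F t / Real.log (1 + t) - c / Real.log (1 + t)) atTop (𝓝 A) := by
      simpa using hlim.sub hconst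
    have hF_comp : Tendsto (fun t => F (t * Real.log t ^ n) / Real.log (1 + t)) atTop (𝓝 A) := by
      simpa using tendsto_comp_div_of_isEquivalent hlim (tendsto_mul_log_zpow_atTop n)
        (isEquivalent_log_one_add_mul_log_zpow n)
    refine tendsto_of_tendsto_of_tendsto_of_le_of_le' hF_sub hF_comp ?_ ?_
    · filter_upwards [hlower, hpos] with t ht hL
      rw [← sub_div]
      gcongr
    · filter_upwards [hupper, hpos] with t ht hL
      gcongr
  · have htop := tendsto_div_log_pow_atTop n
    have hG_comp : Tendsto (fun t => G (t / Real.log t ^ n) / Real.log (1 + t)) atTop (𝓝 A) := by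
      refine tendsto_comp_div_of_isEquivalent hlim htop ?_
      simpa [div_eq_mul_inv] using isEquivalent_log_one_add_mul_log_zpow (-n)
    have hG_add : Tendsto (fun t => G t / Real.log (1 + t) + c / Real.log (1 + t)) atTop (𝓝 A) := by
      simpa using hlim.add hconst
    refine tendsto_of_tendsto_of_tendsto_of_le_of_le' hG_comp hG_add ?_ ?_
    · filter_upwards [htop.eventually hupper, hpos, eventually_div_log_pow_mul_log_pow_le n,
        htop.eventually_ge_atTop 1, eventually_ge_atTop 0] with t ht hL hle hdiv ht0
      have hlog : 0 ≤ Real.log (t / Real.log t ^ n) := Real.log_nonneg hdiv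
      gcongr
      exact ht.trans (hF (mem_Ici.2 (by positivity)) ht0 hle)
    · filter_upwards [hlower, hpos] with t ht hL
      rw [← add_div]
      gcongr
      linarith

end LogarithmicScale

section Antitone

variable {μ : ℝ → ℝ} {g : ℝ → ℝ} {a b u : ℝ}

lemma nonneg_of_antitoneOn_of_tendsto_zero (hmono : AntitoneOn μ (Ici a))
    (hlim : Tendsto μ atTop (𝓝 0)) (hb : a ≤ b) : 0 ≤ μ b :=
  le_of_tendsto hlim <| (eventually_ge_atTop b).mono fun _ hx => hmono hb (hb.trans hx) hx

lemma intervalIntegrable_of_antitoneOn_Ici {c : ℝ} (hmono : AntitoneOn μ (Ici c))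
    (ha : c ≤ a) (hb : c ≤ b) : IntervalIntegrable μ volume a b :=
  (hmono.mono fun _ hx => (le_min ha hb).trans hx.1).intervalIntegrable

lemma monotoneOn_integral_of_nonneg (hint : ∀ t, a ≤ t → IntervalIntegrable μ volume a t)
    (hnonneg : ∀ s, a ≤ s → 0 ≤ μ s) : MonotoneOn (fun t => ∫ s in a..t, μ s) (Ici a) := by
  intro b hb c hc hbc
  refine intervalIntegral.integral_mono_interval le_rfl hb hbc ?_ (hint c hc)
  filter_upwards [ae_restrict_mem measurableSet_Ioc] with s hs using hnonneg s hs.1.le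

lemma monotoneOn_integral_of_antitoneOn (hmono : AntitoneOn μ (Ici a))
    (hnonneg : ∀ s, a ≤ s → 0 ≤ μ s) : MonotoneOn (fun t => ∫ s in a..t, μ s) (Ici a) :=
  monotoneOn_integral_of_nonneg
    (fun _ ht => intervalIntegrable_of_antitoneOn_Ici hmono le_rfl ht) hnonneg

lemma sub_mul_le_integral_of_antitoneOn (hab : a ≤ b) (hmono : AntitoneOn μ (Icc a b)) :
    (b - a) * μ b ≤ ∫ s in a..b, μ s := by
  have hint : IntervalIntegrable μ volume a b :=
    AntitoneOn.intervalIntegrable (by rwa [uIcc_of_le hab])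
  simpa using intervalIntegral.integral_mono_on hab intervalIntegrable_const hint
    fun s hs => hmono hs (right_mem_Icc.2 hab) hs.2

lemma isBigO_div_of_integral_isBigO (hmono : AntitoneOn μ (Ici 0))
    (hnonneg : ∀ s, 0 ≤ s → 0 ≤ μ s) (hg : (fun t => ∫ s in (0 : ℝ)..t, μ s) =O[atTop] g) :
    μ =O[atTop] fun t => g t / t := by
  have hle : μ =O[atTop] fun t => (∫ s in (0 : ℝ)..t, μ s) / t := by
    refine IsBigO.of_norm_eventuallyLE ?_
    filter_upwards [eventually_gt_atTop 0] with t ht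
    rw [Real.norm_of_nonneg (hnonneg t ht.le), le_div_iff₀ ht, mul_comm]
    simpa using sub_mul_le_integral_of_antitoneOn ht.le (hmono.mono Icc_subset_Ici_self)
  simpa only [div_eq_mul_inv] using hle.trans (hg.mul (isBigO_refl (fun t : ℝ => t⁻¹) atTop))

/-- The distribution function `λ(u) = |{s ≥ 0 : μ(s) > u}|` of `μ` on the half-line, which measures
the part of `[0, ∞)` where `μ` exceeds the level `u`. It is real-valued, so it is `0` (not `∞`) when
this set has infinite measure. -/
noncomputable def distributionFunction (μ : ℝ → ℝ) (u : ℝ) : ℝ :=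
  volume.real {s : ℝ | 0 ≤ s ∧ u < μ s}

lemma distributionFunction_nonneg : 0 ≤ distributionFunction μ u := measureReal_nonneg

lemma setOf_lt_subset_Icc_of_antitoneOn (hmono : AntitoneOn μ (Ici 0)) (ha : 0 ≤ a)
    (hau : μ a ≤ u) : {s : ℝ | 0 ≤ s ∧ u < μ s} ⊆ Icc 0 a := fun _ hs =>
  ⟨hs.1, le_of_not_ge fun has => (hs.2.trans_le (hmono ha hs.1 has)).not_ge hau⟩

lemma distributionFunction_le (hmono : AntitoneOn μ (Ici 0)) (ha : 0 ≤ a) (hau : μ a ≤ u) :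
    distributionFunction μ u ≤ a := by
  simpa [distributionFunction, ha] using measureReal_mono (μ := volume)
    (setOf_lt_subset_Icc_of_antitoneOn hmono ha hau) measure_Icc_lt_top.ne

lemma le_of_distributionFunction_lt (hmono : AntitoneOn μ (Ici 0)) (ha : 0 ≤ a) (hau : μ a ≤ u)
    (hb : distributionFunction μ u < b) : μ b ≤ u := by
  by_contra! hub
  have hb0 : 0 ≤ b := distributionFunction_nonneg.trans hb.le
  have hsub : Icc 0 b ⊆ {s : ℝ | 0 ≤ s ∧ u < μ s} := fun s hs =>
    ⟨hs.1, hub.trans_le (hmono hs.1 hb0 hs.2)⟩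
  have hfin : volume {s : ℝ | 0 ≤ s ∧ u < μ s} ≠ ⊤ :=
    measure_ne_top_of_subset (setOf_lt_subset_Icc_of_antitoneOn hmono ha hau)
      measure_Icc_lt_top.ne
  have hle : b ≤ distributionFunction μ u := by
    simpa [distributionFunction, hb0] using measureReal_mono (μ := volume) hsub hfin
  exact hle.not_gt hb

lemma integral_sub_mul_le_integral_distributionFunction (hmono : AntitoneOn μ (Ici 0))
    (hnonneg : ∀ s, 0 ≤ s → 0 ≤ μ s) (ha : 0 ≤ a) (hau : μ a ≤ u) (hb : 0 ≤ b) :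
    (∫ s in (0 : ℝ)..b, μ s) - b * u ≤ ∫ s in (0 : ℝ)..distributionFunction μ u, μ s := by
  have hu : 0 ≤ u := (hnonneg a ha).trans hau
  have hdist : 0 ≤ distributionFunction μ u := distributionFunction_nonneg
  have hint {c d : ℝ} := intervalIntegrable_of_antitoneOn_Ici (a := c) (b := d) hmono
  rcases le_total b (distributionFunction μ u) with hle | hle
  · have := monotoneOn_integral_of_antitoneOn hmono hnonneg hb hdist hle
    exact (sub_le_self _ (by positivity)).trans this
  · have htail : ∫ s in distributionFunction μ u..b, μ s ≤ b * u := by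
      calc ∫ s in distributionFunction μ u..b, μ s
          ≤ ∫ _ in distributionFunction μ u..b, u :=
            intervalIntegral.integral_mono_on_of_le_Ioo hle (hint hdist hb)
              intervalIntegrable_const
              fun _ hs => le_of_distributionFunction_lt hmono ha hau hs.1
        _ = (b - distributionFunction μ u) * u := by simp
        _ ≤ b * u := by gcongr; linarith
    rw [← intervalIntegral.integral_add_adjacent_intervals (hint le_rfl hdist) (hint hdist hb)]
    linarith

end Antitone

section LogarithmicGrowth

variable {μ : ℝ → ℝ} {A C : ℝ}

lemma isBigO_log_of_tendsto_div_log {F : ℝ → ℝ}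
    (hF : Tendsto (fun t => F t / Real.log (1 + t)) atTop (𝓝 A)) :
    F =O[atTop] fun t => Real.log (1 + t) := by
  refine isBigO_of_div_tendsto_nhds ?_ A hF
  filter_upwards [tendsto_log_one_add_atTop.eventually_gt_atTop 0] with t ht h0
  exact absurd h0 ht.ne'

lemma tendsto_zero_of_integral_le_log {K : ℝ} (hmono : AntitoneOn μ (Ici 0))
    (hnonneg : ∀ s, 0 ≤ s → 0 ≤ μ s)
    (hlog : ∀ t, 0 < t → ∫ s in (0 : ℝ)..t, μ s ≤ K * Real.log (1 + t)) :
    Tendsto μ atTop (𝓝 0) := by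
  have hF : (fun t => ∫ s in (0 : ℝ)..t, μ s) =O[atTop] fun t => Real.log (1 + t) := by
    refine IsBigO.of_bound K ?_
    filter_upwards [eventually_gt_atTop 0] with t ht
    rw [Real.norm_of_nonneg (intervalIntegral.integral_nonneg ht.le fun s hs => hnonneg s hs.1),
      Real.norm_of_nonneg (Real.log_nonneg (by linarith))]
    exact hlog t ht
  have hlog_div : Tendsto (fun t : ℝ => Real.log (1 + t) / t) atTop (𝓝 0) :=
    (isEquivalent_log_one_add.isBigO.trans_isLittleO
      Real.isLittleO_log_id_atTop).tendsto_div_nhds_zero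
  exact (isBigO_div_of_integral_isBigO hmono hnonneg hF).trans_tendsto hlog_div

lemma tendsto_mul_comp_mul_log_sq (hmono : AntitoneOn μ (Ici 0))
    (hnonneg : ∀ s, 0 ≤ s → 0 ≤ μ s)
    (hlog : (fun t => ∫ s in (0 : ℝ)..t, μ s) =O[atTop] fun t => Real.log (1 + t)) :
    Tendsto (fun t => t * μ (t * Real.log t ^ 2)) atTop (𝓝 0) := by
  have hlog_scale : (fun t : ℝ => Real.log (1 + t * Real.log t ^ 2)) =O[atTop] Real.log := by
    simpa using ((isEquivalent_log_one_add_mul_log_zpow 2).trans isEquivalent_log_one_add).isBigO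
  have hscale : Tendsto (fun t : ℝ => t * Real.log t ^ 2) atTop atTop := by
    simpa using tendsto_mul_log_zpow_atTop 2
  have hμ : (fun t => μ (t * Real.log t ^ 2)) =O[atTop]
      fun t => Real.log t / (t * Real.log t ^ 2) := by
    simpa only [div_eq_mul_inv, Function.comp_def] using
      ((isBigO_div_of_integral_isBigO hmono hnonneg hlog).comp_tendsto hscale).trans
        (hlog_scale.mul (isBigO_refl (fun t : ℝ => (t * Real.log t ^ 2)⁻¹) atTop))
  refine ((isBigO_refl (fun t : ℝ => t) atTop).mul hμ).trans_tendsto ?_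
  refine (tendsto_inv_atTop_zero.comp Real.tendsto_log_atTop).congr' ?_
  filter_upwards [eventually_gt_atTop 1] with t ht
  have : 0 < Real.log t := Real.log_pos ht
  simp only [Function.comp_apply]
  field_simp

lemma eventually_distributionFunction_inv_le (hmono : AntitoneOn μ (Ici 0))
    (hnonneg : ∀ s, 0 ≤ s → 0 ≤ μ s)
    (hlog : (fun t => ∫ s in (0 : ℝ)..t, μ s) =O[atTop] fun t => Real.log (1 + t)) :
    ∀ᶠ t in atTop, distributionFunction μ (1 / t) ≤ t * Real.log t ^ 2 := by
  filter_upwards [(tendsto_mul_comp_mul_log_sq hmono hnonneg hlog).eventually_le_const one_pos,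
    eventually_gt_atTop 0] with t hle ht
  exact distributionFunction_le hmono (by positivity) ((le_div_iff₀' ht).2 hle)

lemma eventually_integral_sub_one_le_integral_distributionFunction (hmono : AntitoneOn μ (Ici 0))
    (hlim : Tendsto μ atTop (𝓝 0)) :
    ∀ᶠ t in atTop, (∫ s in (0 : ℝ)..t, μ s) - 1 ≤
      ∫ s in (0 : ℝ)..distributionFunction μ (1 / t), μ s := by
  filter_upwards [eventually_gt_atTop 0] with t ht
  obtain ⟨a, ha, hat⟩ := ((eventually_ge_atTop 0).and
    (hlim.eventually_le_const (one_div_pos.2 ht))).exists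
  simpa [ht.ne'] using integral_sub_mul_le_integral_distributionFunction hmono
    (fun _ => nonneg_of_antitoneOn_of_tendsto_zero hmono hlim) ha hat ht.le

lemma integral_isBigO_log_of_integral_distributionFunction (hmono : AntitoneOn μ (Ici 0))
    (hlim : Tendsto μ atTop (𝓝 0))
    (hlog : (fun t => ∫ s in (0 : ℝ)..distributionFunction μ (1 / t), μ s) =O[atTop]
      fun t => Real.log (1 + t)) :
    (fun t => ∫ s in (0 : ℝ)..t, μ s) =O[atTop] fun t => Real.log (1 + t) := by
  have hone : (fun _ => 1 : ℝ → ℝ) =O[atTop] fun t : ℝ => Real.log (1 + t) :=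
    (isLittleO_const_left.2
      (.inr (tendsto_norm_atTop_atTop.comp tendsto_log_one_add_atTop))).isBigO
  refine IsBigO.trans (IsBigO.of_norm_eventuallyLE ?_) (hlog.add hone)
  filter_upwards [eventually_ge_atTop 0,
    eventually_integral_sub_one_le_integral_distributionFunction hmono hlim] with t ht hle
  rw [Real.norm_of_nonneg (intervalIntegral.integral_nonneg ht fun s hs =>
    nonneg_of_antitoneOn_of_tendsto_zero hmono hlim hs.1)]
  linarith

lemma tendsto_integral_div_log_iff_distributionFunction (hmono : AntitoneOn μ (Ici 0))
    (hlim : Tendsto μ atTop (𝓝 0)) :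
    Tendsto (fun t => (∫ s in (0 : ℝ)..t, μ s) / Real.log (1 + t)) atTop (𝓝 A) ↔
      Tendsto (fun t => (∫ s in (0 : ℝ)..distributionFunction μ (1 / t), μ s) / Real.log (1 + t))
        atTop (𝓝 A) := by
  have hnonneg : ∀ s, 0 ≤ s → 0 ≤ μ s := fun _ => nonneg_of_antitoneOn_of_tendsto_zero hmono hlim
  have hF := monotoneOn_integral_of_antitoneOn hmono hnonneg
  have hsandwich (hlog : (fun t => ∫ s in (0 : ℝ)..t, μ s) =O[atTop] fun t => Real.log (1 + t)) :=
    tendsto_div_log_iff_of_sandwich (A := A) 2 hF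
      (eventually_integral_sub_one_le_integral_distributionFunction hmono hlim) <| by
        filter_upwards [eventually_distributionFunction_inv_le hmono hnonneg hlog] with t ht
        exact hF distributionFunction_nonneg (distributionFunction_nonneg.trans ht) ht
  exact ⟨fun h => (hsandwich (isBigO_log_of_tendsto_div_log h)).1 h, fun h =>
    (hsandwich (integral_isBigO_log_of_integral_distributionFunction hmono hlim
      (isBigO_log_of_tendsto_div_log h))).2 h⟩

lemma tendsto_div_log_iff_comp_mul_log {F : ℝ → ℝ} (hF : MonotoneOn F (Ici 0)) (hC : 0 < C) :
    Tendsto (fun t => F t / Real.log (1 + t)) atTop (𝓝 A) ↔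
      Tendsto (fun t => F (C * t * Real.log t) / Real.log (1 + t)) atTop (𝓝 A) := by
  refine tendsto_div_log_iff_of_sandwich (c := 0) 2 hF ?_ ?_
  · filter_upwards [eventually_ge_atTop 0,
      Real.tendsto_log_atTop.eventually_ge_atTop (1 / C)] with t ht hlog
    have hone : 1 ≤ C * Real.log t := (div_le_iff₀' hC).1 hlog
    have hle : t ≤ C * t * Real.log t := by nlinarith
    simpa using hF ht (ht.trans hle) hle
  · filter_upwards [eventually_ge_atTop 1, Real.tendsto_log_atTop.eventually_ge_atTop C]
      with t ht hlog
    have hlog_nonneg : 0 ≤ Real.log t := Real.log_nonneg ht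
    refine hF (mem_Ici.2 (by positivity)) (mem_Ici.2 (by positivity)) ?_
    calc C * t * Real.log t ≤ Real.log t * t * Real.log t := by gcongr
      _ = t * Real.log t ^ 2 := by ring

end LogarithmicGrowth

theorem dixmier_trace_truncation_tfae_general (μ : ℝ → ℝ) (hmono : AntitoneOn μ (Ici 0))
    (hlim : Tendsto μ atTop (𝓝 0)) (C : ℝ) (hC : 0 < C) (A : ℝ) :
    List.TFAE [
      Tendsto (fun t : ℝ => (∫ s in (0 : ℝ)..t, μ s) / Real.log (1 + t)) atTop (𝓝 A),
      Tendsto (fun t : ℝ =>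
          (∫ s in (0 : ℝ)..distributionFunction μ (1 / t), μ s) / Real.log (1 + t))
        atTop (𝓝 A),
      Tendsto (fun t : ℝ => (∫ s in (0 : ℝ)..(C * t * Real.log t), μ s) / Real.log (1 + t))
        atTop (𝓝 A)] := by
  have hF : MonotoneOn (fun t => ∫ s in (0 : ℝ)..t, μ s) (Ici 0) :=
    monotoneOn_integral_of_antitoneOn hmono fun _ => nonneg_of_antitoneOn_of_tendsto_zero hmono hlim
  tfae_have 1 ↔ 2 := tendsto_integral_div_log_iff_distributionFunction hmono hlim
  tfae_have 1 ↔ 3 := tendsto_div_log_iff_comp_mul_log hF hC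
  tfae_finish

/-- **Proposition 10.5 (limit form).** For a nonincreasing `μ : [0,∞) → [0,∞)` with
`∫₀^t μ ≤ K·log(1+t)`, distribution function `λ(u) = |{s ≥ 0 : μ(s) > u}|`, `C > 0`
and `A ∈ ℝ`, the following are equivalent:
(a) `lim_{t→∞} (1/log(1+t))∫₀^t μ = A`;
(b) `lim_{t→∞} (1/log(1+t))∫₀^{λ(1/t)} μ = A`;
(c) `lim_{t→∞} (1/log(1+t))∫₀^{C·t·log t} μ = A`. -/
theorem dixmier_trace_truncation_tfae (μ : ℝ → ℝ)
    (hμ0 : ∀ s : ℝ, 0 ≤ s → 0 ≤ μ s) (hmono : AntitoneOn μ (Set.Ici 0))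
    (K : ℝ) (hK : 0 < K)
    (h : ∀ t : ℝ, 0 < t → (∫ s in (0:ℝ)..t, μ s) ≤ K * Real.log (1 + t))
    (C : ℝ) (hC : 0 < C) (A : ℝ) :
    List.TFAE [
      Tendsto (fun t : ℝ => (∫ s in (0:ℝ)..t, μ s) / Real.log (1 + t))
        atTop (nhds A),
      Tendsto (fun t : ℝ =>
          (∫ s in (0:ℝ)..((volume {u : ℝ | 0 ≤ u ∧ 1 / t < μ u}).toReal), μ s) /
            Real.log (1 + t))
        atTop (nhds A),
      Tendsto (fun t : ℝ =>
          (∫ s in (0:ℝ)..(C * t * Real.log t), μ s) / Real.log (1 + t))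
        atTop (nhds A)] := by
  exact dixmier_trace_truncation_tfae_general μ hmono
    (tendsto_zero_of_integral_le_log hmono hμ0 h) C hC A
end

section
/- Let μ : [0,∞) → [0,1] be nonincreasing with ∫₀^t μ(s) ds ≤ K·log(1+t) for all t > 0 and some K > 0. Let ω be a linear functional on L∞((0,∞)) which is positive (ω(f) ≥ 0 whenever f ≥ 0 a.e.), satisfies ess liminf_{t → +∞} f(t) ≤ ω(f) ≤ ess limsup_{t → +∞} f(t) for every real-valued f ∈ L∞((0,∞)), and satisfies ω ∘ D_c = ω, ω ∘ P^a = ω and ω ∘ M = ω for all c > 0 and a > 0. Define g(t) = (1/log(1+t))∫₀^t μ(s) ds for t > 0, and F(t) = (1/log t)∫₀^∞ μ(s)^{1 + 1/log t} ds for t > e, F(t) = 0 for 0 < t ≤ e. Then g and F are bounded and ω(g) = ω(F). (This expresses the Dixmier trace of a positive operator with singular value function μ as an ω-limit of residues (1/r)∫₀^∞ μ(s)^{1+1/r} ds of its zeta function, via the substitution r = log t.) -/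
/-!
Let `σ` be the image of the measure `μ(s) ds` under `s ↦ -log μ(s)`. The zeta function of `μ` is the
Laplace transform of `σ`: `F(t) = (1 / log t) ∫ exp (-u / log t) dσ(u)`. On the other hand
`∫₀^t μ ≤ σ([0, log t)) + 1`, because `{s ≤ t, μ(s) ≤ 1 / t}` has mass at most `1`, and for every
`a > 1` and large `t` also `σ([0, log t)) ≤ ∫₀^(t^a) μ`, because eventually `μ(s) ≤ s ^ (-1 / a)`.
By power invariance `g(t)` may therefore be replaced by `(1 / log t) σ([0, log t))`. This function
and `F` are the averages `Tφ(t) = (1 / log t) ∫ φ(u / log t) dσ(u)` for the kernels `φ = 𝟙_[0, 1)`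
and `φ(v) = exp (-v)`.

Power maps act on `Tφ` by dilating `φ`, hence `Λ φ = ω(Tφ)` is a positive functional on
exponentially decaying kernels with `Λ (φ (· / a)) = a Λ φ`, like a multiple of `∫₀^∞ φ`. As in
Karamata's Tauberian theorem, comparing `exp (-v)` with its Riemann sums, which are combinations of
the kernels `𝟙_[0, a)`, yields `Λ (exp (-·)) = Λ 𝟙_[0, 1)`. The tail beyond `v = nδ` is at most
`exp (-nδ / 2) exp (-v / 2)`, on which `Λ` takes the value `2 exp (-nδ / 2) Λ (exp (-·))`.
-/

open Filter MeasureTheory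

/-- A function is (everywhere) bounded. -/
def BddFun (f : ℝ → ℝ) : Prop := ∃ C : ℝ, ∀ x, |f x| ≤ C

/-- The logarithmic Cesàro operator: `(Mf)(t) = (1/log t)∫₁^t f(s) ds/s` for `t > 1`,
and `0` otherwise. -/
noncomputable def Mop (f : ℝ → ℝ) : ℝ → ℝ := fun t =>
  if 1 < t then (∫ s in (1:ℝ)..t, f s / s) / Real.log t else 0

/-- `g(t) = (1/log(1+t)) ∫₀^t μ(s) ds` for `t > 0` (and `0` for `t ≤ 0`). -/
noncomputable def gFn (μ : ℝ → ℝ) : ℝ → ℝ := fun t =>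
  if 0 < t then (∫ s in (0:ℝ)..t, μ s) / Real.log (1 + t) else 0

/-- `F(t) = (1/log t) ∫₀^∞ μ(s)^{1 + 1/log t} ds` for `t > e` (and `0` for `t ≤ e`). -/
noncomputable def zetaFn (μ : ℝ → ℝ) : ℝ → ℝ := fun t =>
  if Real.exp 1 < t then
    (∫ s in Set.Ioi (0:ℝ), μ s ^ (1 + 1 / Real.log t)) / Real.log t
  else 0

section

open Set Topology
open scoped NNReal ENNReal

/-! ### Power-invariant limits -/

/-- The space on which the generalized limits live: bounded measurable representatives of
`L∞((0,∞))`. -/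
def boundedMeasurable : Submodule ℝ (ℝ → ℝ) where
  carrier := {f | Measurable f ∧ BddFun f}
  add_mem' := fun ⟨hf, A, hA⟩ ⟨hg, B, hB⟩ =>
    ⟨hf.add hg, A + B, fun t => (abs_add_le _ _).trans (add_le_add (hA t) (hB t))⟩
  zero_mem' := ⟨measurable_const, 0, by simp⟩
  smul_mem' := fun c f ⟨hf, A, hA⟩ =>
    ⟨hf.const_smul c, |c| * A, fun t => by
      simpa [abs_mul] using mul_le_mul_of_nonneg_left (hA t) (abs_nonneg c)⟩

theorem comp_rpow_mem_boundedMeasurable {f : ℝ → ℝ} (hf : f ∈ boundedMeasurable) (a : ℝ) :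
    (fun t => f (t ^ a)) ∈ boundedMeasurable :=
  ⟨hf.1.comp (measurable_id.pow_const a), hf.2.imp fun _ hA t => hA (t ^ a)⟩

theorem neBot_atTop_inf_ae_restrict_Ioi (a : ℝ) :
    (atTop ⊓ ae ((volume : Measure ℝ).restrict (Ioi a))).NeBot := by
  refine inf_neBot_iff_frequently_left.2 fun {p} hp => frequently_ae_iff.2 ?_
  obtain ⟨b, hb⟩ := eventually_atTop.1 hp
  refine ne_of_gt (lt_of_lt_of_le (b := volume (Ioi (max a b))) (by simp) ?_)
  rw [← Measure.restrict_eq_self volume (Ioi_subset_Ioi (le_max_left a b))]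
  exact measure_mono fun t ht => hb t ((le_max_right a b).trans (le_of_lt ht))

/-- A linear functional that is dominated by the essential limit superior at `+∞` and invariant
under the power maps `P^a`. -/
structure IsPowerInvariantLimit (ω : (ℝ → ℝ) →ₗ[ℝ] ℝ) : Prop where
  le_limsup : ∀ f ∈ boundedMeasurable,
    ω f ≤ limsup f (atTop ⊓ ae ((volume : Measure ℝ).restrict (Ioi 0)))
  comp_rpow : ∀ f ∈ boundedMeasurable, ∀ a : ℝ, 0 < a → ω (fun t => f (t ^ a)) = ω f

namespace IsPowerInvariantLimit

variable {ω : (ℝ → ℝ) →ₗ[ℝ] ℝ} {f g : ℝ → ℝ}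

theorem le_of_eventually_le_const (hω : IsPowerInvariantLimit ω) (hf : f ∈ boundedMeasurable)
    {c : ℝ} (h : ∀ᶠ t in atTop, f t ≤ c) : ω f ≤ c := by
  have := neBot_atTop_inf_ae_restrict_Ioi 0
  obtain ⟨A, hA⟩ := hf.2
  exact (hω.le_limsup f hf).trans <| limsup_le_of_le
    (isCoboundedUnder_le_of_le _ fun t => (abs_le.1 (hA t)).1) (h.filter_mono inf_le_left)

theorem le_of_eventually_le_add (hω : IsPowerInvariantLimit ω) (hf : f ∈ boundedMeasurable)
    (hg : g ∈ boundedMeasurable) (h : ∀ ε > 0, ∀ᶠ t in atTop, f t ≤ g t + ε) : ω f ≤ ω g := by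
  refine le_of_forall_pos_le_add fun ε hε => sub_le_iff_le_add'.1 ?_
  rw [← map_sub]
  exact hω.le_of_eventually_le_const (sub_mem hf hg)
    ((h ε hε).mono fun t ht => sub_le_iff_le_add'.2 ht)

theorem mono (hω : IsPowerInvariantLimit ω) (hf : f ∈ boundedMeasurable)
    (hg : g ∈ boundedMeasurable) (h : ∀ᶠ t in atTop, f t ≤ g t) : ω f ≤ ω g :=
  hω.le_of_eventually_le_add hf hg fun _ hε => h.mono fun _ ht => ht.trans (by linarith)

theorem congr (hω : IsPowerInvariantLimit ω) (hf : f ∈ boundedMeasurable)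
    (hg : g ∈ boundedMeasurable) (h : f =ᶠ[atTop] g) : ω f = ω g :=
  le_antisymm (hω.mono hf hg h.le) (hω.mono hg hf h.symm.le)

end IsPowerInvariantLimit

/-! ### Homogeneous functionals on decaying kernels -/

/-- Measurable kernels with exponential decay on `[0, ∞)`; their values on the negative axis are
irrelevant, since they are only integrated against measures carried by `[0, ∞)`. -/
def decayingKernels : Submodule ℝ (ℝ → ℝ) where
  carrier := {φ | Measurable φ ∧
    ∃ A a : ℝ, 0 ≤ A ∧ 0 < a ∧ ∀ v, 0 ≤ v → |φ v| ≤ A * Real.exp (-v / a)}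
  add_mem' := by
    rintro φ ψ ⟨hφ, A, a, hA, ha, hφA⟩ ⟨hψ, B, b, hB, hb, hψB⟩
    refine ⟨hφ.add hψ, A + B, max a b, by positivity, by positivity, fun v hv => ?_⟩
    calc |φ v + ψ v| ≤ |φ v| + |ψ v| := abs_add_le _ _
      _ ≤ A * Real.exp (-v / a) + B * Real.exp (-v / b) := add_le_add (hφA v hv) (hψB v hv)
      _ ≤ A * Real.exp (-v / max a b) + B * Real.exp (-v / max a b) := by
          simp only [neg_div]
          gcongr
          exacts [le_max_left a b, le_max_right a b]
      _ = (A + B) * Real.exp (-v / max a b) := by ring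
  zero_mem' := ⟨measurable_const, 0, 1, le_rfl, one_pos, by simp⟩
  smul_mem' := by
    rintro c φ ⟨hφ, A, a, hA, ha, hφA⟩
    refine ⟨hφ.const_smul c, |c| * A, a, by positivity, ha, fun v hv => ?_⟩
    simpa [abs_mul, mul_assoc] using mul_le_mul_of_nonneg_left (hφA v hv) (abs_nonneg c)

/-- The kernel `v ↦ exp (-v / a)`, which produces Laplace transforms. -/
noncomputable def expKernel (a : ℝ) (ha : 0 < a) : decayingKernels :=
  ⟨fun v => Real.exp (-v / a), by fun_prop, 1, a, zero_le_one, ha, fun v _ => by simp⟩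

/-- The kernel `𝟙_(-∞, a)`, which produces distribution functions. -/
noncomputable def stepKernel (a : ℝ) : decayingKernels :=
  ⟨(Iio a).indicator 1, measurable_one.indicator measurableSet_Iio, Real.exp a, 1,
    (Real.exp_pos a).le, one_pos, fun v _ => by
      by_cases hv : v < a
      · simpa [hv, ← Real.exp_add] using hv.le
      · simpa [hv] using by positivity⟩

theorem stepKernel_apply (a v : ℝ) : (stepKernel a : ℝ → ℝ) v = if v < a then 1 else 0 := rfl

/-- A linear functional that is monotone for the order on `[0, ∞)` and scales under dilations like
the Lebesgue integral. -/
structure IsHomogeneousPositive (Λ : decayingKernels →ₗ[ℝ] ℝ) : Prop where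
  mono : ∀ φ ψ : decayingKernels, (∀ v, 0 ≤ v → (φ : ℝ → ℝ) v ≤ (ψ : ℝ → ℝ) v) → Λ φ ≤ Λ ψ
  dilation : ∀ (φ ψ : decayingKernels) (a : ℝ), 0 < a →
    (∀ v, (ψ : ℝ → ℝ) v = (φ : ℝ → ℝ) (v / a)) → Λ ψ = a * Λ φ

/-- The kernel `𝟙_[kδ, (k+1)δ)`, from which Riemann sums of mesh `δ` are built. -/
noncomputable def sliceKernel (δ : ℝ) (k : ℕ) : decayingKernels :=
  stepKernel ((k + 1 : ℕ) * δ) - stepKernel (k * δ)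

theorem sliceKernel_apply {δ : ℝ} (hδ : 0 ≤ δ) (k : ℕ) (v : ℝ) :
    (sliceKernel δ k : ℝ → ℝ) v = if k * δ ≤ v ∧ v < (k + 1 : ℕ) * δ then 1 else 0 := by
  have hk : k * δ ≤ (k + 1 : ℕ) * δ := by gcongr; simp
  simp only [sliceKernel, Submodule.coe_sub, Pi.sub_apply, stepKernel_apply]
  rcases lt_or_ge v (k * δ) with h | h
  · simp only [h, h.trans_le hk, h.not_ge, if_true, false_and, if_false, sub_self]
  · simp [h, h.not_gt]

theorem exp_pow_succ_mul_sliceKernel_le {δ : ℝ} (hδ : 0 ≤ δ) (k : ℕ) (v : ℝ) :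
    Real.exp (-δ) ^ (k + 1) * (sliceKernel δ k : ℝ → ℝ) v ≤
      Real.exp (-v) * (sliceKernel δ k : ℝ → ℝ) v := by
  rw [sliceKernel_apply hδ, ← Real.exp_nat_mul]
  split_ifs with h
  · gcongr
    linarith [h.2]
  · simp

theorem exp_mul_sliceKernel_le {δ : ℝ} (hδ : 0 ≤ δ) (k : ℕ) (v : ℝ) :
    Real.exp (-v) * (sliceKernel δ k : ℝ → ℝ) v ≤
      Real.exp (-δ) ^ k * (sliceKernel δ k : ℝ → ℝ) v := by
  rw [sliceKernel_apply hδ, ← Real.exp_nat_mul]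
  split_ifs with h
  · gcongr
    linarith [h.1]
  · simp

theorem sum_mul_sliceKernel (c δ : ℝ) (n : ℕ) {v : ℝ} (hv : 0 ≤ v) :
    ∑ k ∈ Finset.range n, c * (sliceKernel δ k : ℝ → ℝ) v =
      c * (stepKernel (n * δ) : ℝ → ℝ) v := by
  have h := Finset.sum_range_sub (fun k : ℕ => (stepKernel (k * δ) : ℝ → ℝ) v) n
  simp only [Nat.cast_zero, zero_mul, stepKernel_apply 0, hv.not_gt, if_false, sub_zero] at h
  rw [← Finset.mul_sum, ← h]
  rfl

theorem sum_sliceKernel_le_expKernel {δ : ℝ} (hδ : 0 ≤ δ) (n : ℕ) {v : ℝ} (hv : 0 ≤ v) :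
    ∑ k ∈ Finset.range n, Real.exp (-δ) ^ (k + 1) * (sliceKernel δ k : ℝ → ℝ) v ≤
      Real.exp (-v) :=
  calc _ ≤ ∑ k ∈ Finset.range n, Real.exp (-v) * (sliceKernel δ k : ℝ → ℝ) v :=
        Finset.sum_le_sum fun k _ => exp_pow_succ_mul_sliceKernel_le hδ k v
    _ = Real.exp (-v) * (stepKernel (n * δ) : ℝ → ℝ) v := sum_mul_sliceKernel _ _ _ hv
    _ ≤ Real.exp (-v) := by
        rw [stepKernel_apply]
        split_ifs <;> simp [Real.exp_nonneg]

theorem expKernel_le_sum_sliceKernel_add {δ : ℝ} (hδ : 0 ≤ δ) (n : ℕ) {v : ℝ} (hv : 0 ≤ v) :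
    Real.exp (-v) ≤
      ∑ k ∈ Finset.range n, Real.exp (-δ) ^ k * (sliceKernel δ k : ℝ → ℝ) v +
        Real.exp (-(δ / 2)) ^ n * Real.exp (-v / 2) := by
  have tail : Real.exp (-v) ≤ Real.exp (-v) * (stepKernel (n * δ) : ℝ → ℝ) v +
      Real.exp (-(δ / 2)) ^ n * Real.exp (-v / 2) := by
    rw [stepKernel_apply, ← Real.exp_nat_mul, ← Real.exp_add]
    split_ifs with h
    · simp [Real.exp_nonneg]
    · rw [mul_zero, zero_add]
      gcongr
      linarith
  refine tail.trans (add_le_add_left ?_ _)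
  rw [← sum_mul_sliceKernel _ _ _ hv]
  exact Finset.sum_le_sum fun k _ => exp_mul_sliceKernel_le hδ k v

namespace IsHomogeneousPositive

variable {Λ : decayingKernels →ₗ[ℝ] ℝ}

theorem map_stepKernel (hΛ : IsHomogeneousPositive Λ) {a : ℝ} (ha : 0 ≤ a) :
    Λ (stepKernel a) = a * Λ (stepKernel 1) := by
  rcases ha.eq_or_lt with rfl | ha
  · have h0 : ∀ v, 0 ≤ v → (stepKernel 0 : ℝ → ℝ) v = (0 : decayingKernels).1 v :=
      fun v hv => by simp [stepKernel_apply, hv.not_gt]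
    have h : Λ (stepKernel 0) = Λ 0 := le_antisymm (hΛ.mono _ _ fun v hv => (h0 v hv).le)
      (hΛ.mono _ _ fun v hv => (h0 v hv).ge)
    rw [h, map_zero, zero_mul]
  · exact hΛ.dilation _ _ a ha fun v => by simp [stepKernel_apply, div_lt_one ha]

theorem map_expKernel (hΛ : IsHomogeneousPositive Λ) {a : ℝ} (ha : 0 < a) :
    Λ (expKernel a ha) = a * Λ (expKernel 1 one_pos) :=
  hΛ.dilation _ _ a ha fun v => by simp [expKernel, neg_div]

theorem map_sum_sliceKernel (hΛ : IsHomogeneousPositive Λ) {δ : ℝ} (hδ : 0 ≤ δ) (c : ℕ → ℝ)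
    (n : ℕ) : Λ (∑ k ∈ Finset.range n, c k • sliceKernel δ k) =
      (∑ k ∈ Finset.range n, c k) * (δ * Λ (stepKernel 1)) := by
  rw [map_sum, Finset.sum_mul]
  refine Finset.sum_congr rfl fun k _ => ?_
  rw [map_smul, sliceKernel, map_sub, hΛ.map_stepKernel (a := (k + 1 : ℕ) * δ) (by positivity),
    hΛ.map_stepKernel (a := k * δ) (by positivity), smul_eq_mul]
  push_cast
  ring

theorem sum_le_map_expKernel (hΛ : IsHomogeneousPositive Λ) {δ : ℝ} (hδ : 0 ≤ δ) (n : ℕ) :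
    (∑ k ∈ Finset.range n, Real.exp (-δ) ^ k) * (Real.exp (-δ) * (δ * Λ (stepKernel 1))) ≤
      Λ (expKernel 1 one_pos) := by
  rw [← mul_assoc, Finset.sum_mul]
  simp_rw [← pow_succ]
  rw [← hΛ.map_sum_sliceKernel hδ]
  refine hΛ.mono _ _ fun v hv => ?_
  simpa [Finset.sum_apply, expKernel] using sum_sliceKernel_le_expKernel hδ n hv

theorem map_expKernel_le_sum_add (hΛ : IsHomogeneousPositive Λ) {δ : ℝ} (hδ : 0 ≤ δ) (n : ℕ) :
    Λ (expKernel 1 one_pos) ≤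
      (∑ k ∈ Finset.range n, Real.exp (-δ) ^ k) * (δ * Λ (stepKernel 1)) +
        Real.exp (-(δ / 2)) ^ n * (2 * Λ (expKernel 1 one_pos)) := by
  rw [← hΛ.map_sum_sliceKernel hδ, ← hΛ.map_expKernel two_pos, ← smul_eq_mul (_ ^ n),
    ← map_smul, ← map_add]
  refine hΛ.mono _ _ fun v hv => ?_
  simpa [Finset.sum_apply, expKernel] using expKernel_le_sum_sliceKernel_add hδ n hv

theorem riemannSum_bounds (hΛ : IsHomogeneousPositive Λ) {δ : ℝ} (hδ : 0 < δ) :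
    (1 - Real.exp (-δ))⁻¹ * (Real.exp (-δ) * (δ * Λ (stepKernel 1))) ≤
        Λ (expKernel 1 one_pos) ∧
      Λ (expKernel 1 one_pos) ≤ (1 - Real.exp (-δ))⁻¹ * (δ * Λ (stepKernel 1)) := by
  have exp_lt_one {x : ℝ} (hx : 0 < x) : Real.exp (-x) < 1 := by simpa using hx
  have geom := (hasSum_geometric_of_lt_one (Real.exp_nonneg (-δ)) (exp_lt_one hδ)).tendsto_sum_nat
  have tail := tendsto_pow_atTop_nhds_zero_of_lt_one (Real.exp_nonneg (-(δ / 2)))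
    (exp_lt_one (half_pos hδ))
  refine ⟨le_of_tendsto' (geom.mul_const _) (hΛ.sum_le_map_expKernel hδ.le), ?_⟩
  simpa using ge_of_tendsto' ((geom.mul_const (δ * Λ (stepKernel 1))).add (tail.mul_const _))
    (hΛ.map_expKernel_le_sum_add hδ.le)

theorem map_expKernel_one (hΛ : IsHomogeneousPositive Λ) :
    Λ (expKernel 1 one_pos) = Λ (stepKernel 1) := by
  have ratio : Tendsto (fun δ : ℝ => δ / (Real.exp δ - 1)) (𝓝[>] 0) (𝓝 1) := by
    have h := (Real.hasDerivAt_exp 0).tendsto_slope_zero_right.inv₀ (Real.exp_pos 0).ne'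
    simpa [div_eq_mul_inv, mul_comm] using h
  have exp_tendsto : Tendsto Real.exp (𝓝[>] 0) (𝓝 1) := by
    simpa using (Real.continuous_exp.tendsto 0).mono_left nhdsWithin_le_nhds
  have one_sub_exp_neg (δ : ℝ) : 1 - Real.exp (-δ) = (Real.exp δ - 1) / Real.exp δ := by
    rw [Real.exp_neg]
    field_simp
  apply le_antisymm
  · have lim := (exp_tendsto.mul ratio).mul_const (Λ (stepKernel 1))
    rw [one_mul, one_mul] at lim
    refine ge_of_tendsto lim (eventually_mem_nhdsWithin.mono fun δ hδ => ?_)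
    refine (hΛ.riemannSum_bounds hδ).2.trans_eq ?_
    rw [one_sub_exp_neg, inv_div]
    ring
  · have lim := ratio.mul_const (Λ (stepKernel 1))
    rw [one_mul] at lim
    refine le_of_tendsto lim (eventually_mem_nhdsWithin.mono fun δ hδ => ?_)
    refine (Eq.le ?_).trans (hΛ.riemannSum_bounds hδ).1
    rw [one_sub_exp_neg, inv_div, Real.exp_neg]
    field_simp

end IsHomogeneousPositive

/-! ### Measures of linear growth -/

/-- A measure carried by `[0, ∞)` whose distribution function grows at most linearly. -/
structure HasLinearGrowth (σ : Measure ℝ) : Prop where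
  ae_nonneg : ∀ᵐ u ∂σ, 0 ≤ u
  exists_measure_Iio_le :
    ∃ C : ℝ≥0, ∀ r, 0 ≤ r → σ (Iio r) ≤ C * ENNReal.ofReal (1 + r)

theorem ofReal_exp_neg_le_tsum {v : ℝ} (hv : 0 ≤ v) :
    ENNReal.ofReal (Real.exp (-v)) ≤
      ∑' k : ℕ, ENNReal.ofReal (Real.exp (-k)) * (Iio (k + 1 : ℝ)).indicator 1 v := by
  refine le_trans ?_ (ENNReal.le_tsum ⌊v⌋₊)
  rw [indicator_of_mem (mem_Iio.2 (Nat.lt_floor_add_one v)), Pi.one_apply, mul_one]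
  gcongr
  exact Nat.floor_le hv

theorem lintegral_exp_neg_le_tsum {σ : Measure ℝ} (hσ : ∀ᵐ u ∂σ, 0 ≤ u) {r : ℝ} (hr : 0 < r) :
    ∫⁻ u, ENNReal.ofReal (Real.exp (-(u / r))) ∂σ ≤
      ∑' k : ℕ, ENNReal.ofReal (Real.exp (-k)) * σ (Iio ((k + 1) * r)) := by
  have meas (k : ℕ) : Measurable ((Iio ((k + 1) * r)).indicator (1 : ℝ → ℝ≥0∞)) :=
    measurable_one.indicator measurableSet_Iio
  calc ∫⁻ u, ENNReal.ofReal (Real.exp (-(u / r))) ∂σ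
      ≤ ∫⁻ u, ∑' k : ℕ, ENNReal.ofReal (Real.exp (-k)) * (Iio ((k + 1) * r)).indicator 1 u ∂σ := by
        refine lintegral_mono_ae (hσ.mono fun u hu => ?_)
        simpa [indicator_apply, div_lt_iff₀ hr] using
          ofReal_exp_neg_le_tsum (div_nonneg hu hr.le)
    _ = ∑' k : ℕ, ENNReal.ofReal (Real.exp (-k)) * σ (Iio ((k + 1) * r)) := by
        rw [lintegral_tsum fun k => ((meas k).const_mul _).aemeasurable]
        exact tsum_congr fun k => by
          rw [lintegral_const_mul _ (meas k), lintegral_indicator_one measurableSet_Iio]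

namespace HasLinearGrowth

variable {σ : Measure ℝ}

theorem exists_lintegral_exp_le (hσ : HasLinearGrowth σ) :
    ∃ C : ℝ≥0, ∀ r, 0 < r →
      ∫⁻ u, ENNReal.ofReal (Real.exp (-(u / r))) ∂σ ≤ C * ENNReal.ofReal (1 + r) := by
  obtain ⟨C, hC⟩ := hσ.exists_measure_Iio_le
  have summable : Summable fun k : ℕ => Real.exp (-k) * (k + 1) := by
    have h := Real.summable_pow_mul_exp_neg_nat_mul 1 one_pos
    refine (h.add Real.summable_exp_neg_nat).congr fun k => ?_
    ring_nf
  set S := ∑' k : ℕ, ENNReal.ofReal (Real.exp (-k) * (k + 1))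
  have hS : S ≠ ∞ := summable.tsum_ofReal_ne_top
  refine ⟨C * S.toNNReal, fun r hr => ?_⟩
  have slice (k : ℕ) :
      σ (Iio ((k + 1) * r)) ≤ ENNReal.ofReal (k + 1) * (C * ENNReal.ofReal (1 + r)) := by
    rw [mul_left_comm, ← ENNReal.ofReal_mul (by positivity)]
    refine (hC _ (by positivity)).trans ?_
    gcongr
    nlinarith [k.cast_nonneg (α := ℝ)]
  calc ∫⁻ u, ENNReal.ofReal (Real.exp (-(u / r))) ∂σ
      ≤ ∑' k : ℕ, ENNReal.ofReal (Real.exp (-k)) * σ (Iio ((k + 1) * r)) :=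
        lintegral_exp_neg_le_tsum hσ.ae_nonneg hr
    _ ≤ ∑' k : ℕ, ENNReal.ofReal (Real.exp (-k) * (k + 1)) * (C * ENNReal.ofReal (1 + r)) := by
        refine ENNReal.tsum_le_tsum fun k => ?_
        rw [ENNReal.ofReal_mul (Real.exp_nonneg _), mul_assoc]
        gcongr
        exact slice k
    _ = (C * S.toNNReal : ℝ≥0) * ENNReal.ofReal (1 + r) := by
        rw [ENNReal.tsum_mul_right, ENNReal.coe_mul, ENNReal.coe_toNNReal hS]
        ring

theorem exists_lintegral_kernel_le (hσ : HasLinearGrowth σ) (φ : decayingKernels) :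
    ∃ C : ℝ≥0, ∀ r, 0 < r →
      ∫⁻ u, ‖(φ : ℝ → ℝ) (u / r)‖ₑ ∂σ ≤ C * ENNReal.ofReal (1 + r) := by
  obtain ⟨-, A, a, hA, ha, hφ⟩ := φ.2
  obtain ⟨C, hC⟩ := hσ.exists_lintegral_exp_le
  refine ⟨A.toNNReal * C * (1 + a).toNNReal, fun r hr => ?_⟩
  calc ∫⁻ u, ‖(φ : ℝ → ℝ) (u / r)‖ₑ ∂σ
      ≤ ∫⁻ u, ENNReal.ofReal A * ENNReal.ofReal (Real.exp (-(u / (r * a)))) ∂σ := by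
        refine lintegral_mono_ae (hσ.ae_nonneg.mono fun u hu => ?_)
        rw [← ENNReal.ofReal_mul hA, ← ofReal_norm, Real.norm_eq_abs]
        exact ENNReal.ofReal_le_ofReal <| (hφ _ (div_nonneg hu hr.le)).trans_eq <| by
          rw [neg_div, div_div]
    _ ≤ ENNReal.ofReal A * (C * ENNReal.ofReal (1 + r * a)) := by
        rw [lintegral_const_mul _ (by fun_prop)]
        gcongr
        exact hC _ (by positivity)
    _ ≤ ENNReal.ofReal A * (C * (ENNReal.ofReal (1 + a) * ENNReal.ofReal (1 + r))) := by
        rw [← ENNReal.ofReal_mul (by positivity)]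
        gcongr
        nlinarith
    _ = (A.toNNReal * C * (1 + a).toNNReal : ℝ≥0) * ENNReal.ofReal (1 + r) := by
        rw [ENNReal.coe_mul, ENNReal.coe_mul]
        simp only [ENNReal.ofReal]
        ring

theorem integrable_kernel (hσ : HasLinearGrowth σ) (φ : decayingKernels) {r : ℝ} (hr : 0 < r) :
    Integrable (fun u => (φ : ℝ → ℝ) (u / r)) σ := by
  obtain ⟨C, hC⟩ := hσ.exists_lintegral_kernel_le φ
  exact ⟨(φ.2.1.comp (measurable_id.div_const r)).aestronglyMeasurable,
    (hC r hr).trans_lt (ENNReal.mul_lt_top ENNReal.coe_lt_top ENNReal.ofReal_lt_top)⟩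

theorem exists_abs_integral_kernel_le (hσ : HasLinearGrowth σ) (φ : decayingKernels) :
    ∃ C : ℝ, 0 ≤ C ∧ ∀ r, 0 < r → |∫ u, (φ : ℝ → ℝ) (u / r) ∂σ| ≤ C * (1 + r) := by
  obtain ⟨C, hC⟩ := hσ.exists_lintegral_kernel_le φ
  refine ⟨C, C.coe_nonneg, fun r hr => ?_⟩
  rw [← ENNReal.ofReal_le_ofReal_iff (by positivity), ENNReal.ofReal_mul C.coe_nonneg,
    ENNReal.ofReal_coe_nnreal, ← Real.norm_eq_abs, ofReal_norm]
  exact (enorm_integral_le_lintegral_enorm _).trans (hC r hr)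

end HasLinearGrowth

/-- The average `(1 / log t) ∫ φ (u / log t) dσ(u)`, cut off at `t = e` where `log t` becomes
small. The logarithmic parametrization turns power maps into dilations of the kernel. -/
noncomputable def dilationAverage (σ : Measure ℝ) (φ : ℝ → ℝ) : ℝ → ℝ := fun t =>
  if Real.exp 1 < t then (∫ u, φ (u / Real.log t) ∂σ) / Real.log t else 0

theorem one_lt_log_of_exp_one_lt {t : ℝ} (ht : Real.exp 1 < t) : 1 < Real.log t :=
  (Real.lt_log_iff_exp_lt ((Real.exp_pos 1).trans ht)).2 ht

theorem measurable_dilationAverage (σ : Measure ℝ) [SFinite σ] {φ : ℝ → ℝ} (hφ : Measurable φ) :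
    Measurable (dilationAverage σ φ) := by
  have h : StronglyMeasurable fun t => ∫ u, φ (u / Real.log t) ∂σ :=
    StronglyMeasurable.integral_prod_right (f := fun t u => φ (u / Real.log t))
      (hφ.comp (by fun_prop)).stronglyMeasurable
  exact (h.measurable.div Real.measurable_log).ite measurableSet_Ioi measurable_const

theorem dilationAverage_stepKernel (σ : Measure ℝ) {t : ℝ} (ht : Real.exp 1 < t) :
    dilationAverage σ (stepKernel 1) t = σ.real (Iio (Real.log t)) / Real.log t := by
  have h : (fun u => (stepKernel 1 : ℝ → ℝ) (u / Real.log t)) =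
      (Iio (Real.log t)).indicator 1 := by
    ext u
    simp [stepKernel_apply, indicator_apply,
      div_lt_one (one_pos.trans (one_lt_log_of_exp_one_lt ht))]
  rw [dilationAverage, if_pos ht, h, integral_indicator_one measurableSet_Iio]

theorem dilationAverage_comp_div (σ : Measure ℝ) (φ : ℝ → ℝ) {a t : ℝ} (ha : 0 < a)
    (ht : Real.exp 1 < t) (hta : Real.exp 1 < t ^ a) :
    dilationAverage σ (fun v => φ (v / a)) t = a * dilationAverage σ φ (t ^ a) := by
  have hlog : 0 < Real.log t := one_pos.trans (one_lt_log_of_exp_one_lt ht)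
  rw [dilationAverage, dilationAverage, if_pos ht, if_pos hta,
    Real.log_rpow ((Real.exp_pos 1).trans ht)]
  simp only [div_div, mul_comm a]
  field_simp

namespace HasLinearGrowth

variable {σ : Measure ℝ}

theorem dilationAverage_mem_boundedMeasurable [SFinite σ] (hσ : HasLinearGrowth σ)
    (φ : decayingKernels) : dilationAverage σ φ ∈ boundedMeasurable := by
  obtain ⟨C, hC0, hC⟩ := hσ.exists_abs_integral_kernel_le φ
  refine ⟨measurable_dilationAverage σ φ.2.1, 2 * C, fun t => ?_⟩
  unfold dilationAverage
  split_ifs with ht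
  · have hlog := one_lt_log_of_exp_one_lt ht
    have hlog0 := one_pos.trans hlog
    rw [abs_div, abs_of_pos hlog0, div_le_iff₀ hlog0]
    nlinarith [hC _ hlog0]
  · simpa using hC0

theorem dilationAverage_add (hσ : HasLinearGrowth σ) (φ ψ : decayingKernels) :
    dilationAverage σ (φ + ψ : decayingKernels) = dilationAverage σ φ + dilationAverage σ ψ := by
  ext t
  by_cases ht : Real.exp 1 < t
  · have hlog := one_pos.trans (one_lt_log_of_exp_one_lt ht)
    simp only [dilationAverage, if_pos ht, Submodule.coe_add, Pi.add_apply]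
    rw [integral_add (hσ.integrable_kernel φ hlog) (hσ.integrable_kernel ψ hlog), add_div]
  · simp [dilationAverage, ht]

theorem dilationAverage_mono (hσ : HasLinearGrowth σ) (φ ψ : decayingKernels)
    (h : ∀ v, 0 ≤ v → (φ : ℝ → ℝ) v ≤ (ψ : ℝ → ℝ) v) (t : ℝ) :
    dilationAverage σ φ t ≤ dilationAverage σ ψ t := by
  unfold dilationAverage
  split_ifs with ht
  · have hlog := one_pos.trans (one_lt_log_of_exp_one_lt ht)
    gcongr ?_ / _
    exact integral_mono_ae (hσ.integrable_kernel φ hlog) (hσ.integrable_kernel ψ hlog)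
      (hσ.ae_nonneg.mono fun u hu => h _ (div_nonneg hu hlog.le))
  · exact le_rfl

/-- The linear functional `φ ↦ ω (dilationAverage σ φ)` on decaying kernels. -/
noncomputable def averageFunctional (hσ : HasLinearGrowth σ) (ω : (ℝ → ℝ) →ₗ[ℝ] ℝ) :
    decayingKernels →ₗ[ℝ] ℝ where
  toFun φ := ω (dilationAverage σ φ)
  map_add' φ ψ := by rw [hσ.dilationAverage_add, map_add]
  map_smul' c φ := by
    have h : dilationAverage σ (c • φ : decayingKernels) = c • dilationAverage σ φ := by
      ext t
      simp [dilationAverage, integral_const_mul, mul_div_assoc]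
    rw [h, map_smul, RingHom.id_apply]

theorem isHomogeneousPositive_averageFunctional [SFinite σ] (hσ : HasLinearGrowth σ)
    {ω : (ℝ → ℝ) →ₗ[ℝ] ℝ} (hω : IsPowerInvariantLimit ω) :
    IsHomogeneousPositive (hσ.averageFunctional ω) where
  mono φ ψ h := hω.mono (hσ.dilationAverage_mem_boundedMeasurable φ)
    (hσ.dilationAverage_mem_boundedMeasurable ψ) (.of_forall (hσ.dilationAverage_mono φ ψ h))
  dilation φ ψ a ha h := by
    have mem := hσ.dilationAverage_mem_boundedMeasurable φ
    have eventually_eq : dilationAverage σ ψ =ᶠ[atTop]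
        a • fun t => dilationAverage σ φ (t ^ a) := by
      filter_upwards [eventually_gt_atTop (Real.exp 1),
        (tendsto_rpow_atTop ha).eventually_gt_atTop (Real.exp 1)] with t ht hta
      rw [funext h]
      exact dilationAverage_comp_div σ φ ha ht hta
    calc ω (dilationAverage σ ψ) = ω (a • fun t => dilationAverage σ φ (t ^ a)) :=
          hω.congr (hσ.dilationAverage_mem_boundedMeasurable ψ)
            (boundedMeasurable.smul_mem a (comp_rpow_mem_boundedMeasurable mem a)) eventually_eq
      _ = a * ω (dilationAverage σ φ) := by
          rw [map_smul, smul_eq_mul, hω.comp_rpow _ mem a ha]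

theorem map_dilationAverage_expKernel_eq [SFinite σ] (hσ : HasLinearGrowth σ)
    {ω : (ℝ → ℝ) →ₗ[ℝ] ℝ} (hω : IsPowerInvariantLimit ω) :
    ω (dilationAverage σ (expKernel 1 one_pos)) = ω (dilationAverage σ (stepKernel 1)) :=
  (hσ.isHomogeneousPositive_averageFunctional hω).map_expKernel_one

end HasLinearGrowth

/-! ### Singular value functions -/

/-- The singular value function of a positive contraction in the weak trace ideal `L^{(1,∞)}`. -/
structure IsWeakTraceClass (μ : ℝ → ℝ) (K : ℝ) : Prop where
  nonneg : ∀ s, 0 ≤ s → 0 ≤ μ s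
  le_one : ∀ s, 0 ≤ s → μ s ≤ 1
  antitoneOn : AntitoneOn μ (Ici 0)
  integral_le : ∀ t, 0 < t → ∫ s in (0 : ℝ)..t, μ s ≤ K * Real.log (1 + t)

/-- The measure `μ(s) ds` on `(0, ∞)`. -/
noncomputable def densityMeasure (μ : ℝ → ℝ) : Measure ℝ :=
  ((volume : Measure ℝ).restrict (Ioi 0)).withDensity fun s => ENNReal.ofReal (μ s)

/-- The distribution of `-log μ` under `μ(s) ds`. Its Laplace transform is the zeta function
`r ↦ ∫ μ ^ (1 + 1 / r)`. -/
noncomputable def logMeasure (μ : ℝ → ℝ) : Measure ℝ :=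
  (densityMeasure μ).map fun s => -Real.log (μ s)

instance (μ : ℝ → ℝ) : SFinite (logMeasure μ) := by
  unfold logMeasure densityMeasure
  infer_instance

theorem log_one_add_le {t : ℝ} (ht : 1 ≤ t) : Real.log (1 + t) ≤ 1 + Real.log t := by
  have h := Real.log_le_sub_one_of_pos (x := (1 + t) / t) (by positivity)
  rw [Real.log_div (by positivity) (by positivity), add_div, div_self (by positivity)] at h
  linarith [div_le_one_of_le₀ ht (by positivity)]

namespace IsWeakTraceClass

variable {μ : ℝ → ℝ} {K : ℝ}

theorem intervalIntegrable (hμ : IsWeakTraceClass μ K) {t : ℝ} (ht : 0 ≤ t) :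
    IntervalIntegrable μ volume 0 t :=
  (hμ.antitoneOn.mono (by simp [uIcc_of_le ht, Icc_subset_Ici_self])).intervalIntegrable

theorem integral_nonneg (hμ : IsWeakTraceClass μ K) {t : ℝ} (ht : 0 ≤ t) :
    0 ≤ ∫ s in (0 : ℝ)..t, μ s :=
  intervalIntegral.integral_nonneg ht fun s hs => hμ.nonneg s hs.1

theorem const_nonneg (hμ : IsWeakTraceClass μ K) : 0 ≤ K :=
  nonneg_of_mul_nonneg_left ((hμ.integral_nonneg zero_le_one).trans (hμ.integral_le 1 one_pos))
    (Real.log_pos (by norm_num))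

theorem mul_apply_le_integral (hμ : IsWeakTraceClass μ K) {t : ℝ} (ht : 0 ≤ t) :
    t * μ t ≤ ∫ s in (0 : ℝ)..t, μ s := by
  have h := intervalIntegral.integral_mono_on ht intervalIntegrable_const
    (hμ.intervalIntegrable ht) fun s hs => hμ.antitoneOn hs.1 ht hs.2
  simpa using h

theorem eventually_apply_le_rpow (hμ : IsWeakTraceClass μ K) {b : ℝ} (hb : b < 1) :
    ∀ᶠ s in atTop, μ s ≤ s ^ (-b) := by
  have hb' : 0 < 1 - b := sub_pos.2 hb
  have log_isLittleO : (fun s : ℝ => K * (1 + Real.log s)) =o[atTop] fun s => s ^ (1 - b) :=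
    ((Asymptotics.isLittleO_const_left.2 <| .inr <| tendsto_norm_atTop_atTop.comp
      (tendsto_rpow_atTop hb')).add (isLittleO_log_rpow_atTop hb')).const_mul_left K
  filter_upwards [log_isLittleO.bound one_pos, eventually_ge_atTop 1] with s hs hs1
  have hs0 : 0 < s := by linarith
  refine le_of_mul_le_mul_left ?_ hs0
  calc s * μ s ≤ K * Real.log (1 + s) :=
        (hμ.mul_apply_le_integral hs0.le).trans (hμ.integral_le s hs0)
    _ ≤ K * (1 + Real.log s) := by
        gcongr
        exacts [hμ.const_nonneg, log_one_add_le hs1]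
    _ ≤ s ^ (1 - b) := by
        rw [one_mul, Real.norm_of_nonneg (by positivity : (0 : ℝ) ≤ s ^ (1 - b))] at hs
        exact (le_abs_self _).trans hs
    _ = s * s ^ (-b) := by rw [sub_eq_add_neg, Real.rpow_add hs0, Real.rpow_one]

theorem aemeasurable (hμ : IsWeakTraceClass μ K) :
    AEMeasurable μ ((volume : Measure ℝ).restrict (Ioi 0)) :=
  aemeasurable_restrict_of_antitoneOn measurableSet_Ioi (hμ.antitoneOn.mono Ioi_subset_Ici_self)

theorem aemeasurable_neg_log (hμ : IsWeakTraceClass μ K) :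
    AEMeasurable (fun s => -Real.log (μ s)) (densityMeasure μ) :=
  (Real.measurable_log.comp_aemeasurable hμ.aemeasurable).neg.mono_ac
    (withDensity_absolutelyContinuous _ _)

theorem ae_densityMeasure_pos (hμ : IsWeakTraceClass μ K) :
    ∀ᵐ s ∂densityMeasure μ, 0 < s ∧ 0 < μ s := by
  rw [densityMeasure, ae_withDensity_iff' hμ.aemeasurable.ennreal_ofReal]
  filter_upwards [ae_restrict_mem measurableSet_Ioi] with s hs hs'
  exact ⟨hs, by simpa using hs'⟩

theorem densityMeasure_Iic (hμ : IsWeakTraceClass μ K) {t : ℝ} (ht : 0 ≤ t) :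
    densityMeasure μ (Iic t) = ENNReal.ofReal (∫ s in (0 : ℝ)..t, μ s) := by
  rw [densityMeasure, withDensity_apply _ measurableSet_Iic,
    Measure.restrict_restrict measurableSet_Iic, Iic_inter_Ioi,
    intervalIntegral.integral_of_le ht, ofReal_integral_eq_lintegral_ofReal
      (hμ.intervalIntegrable ht).1]
  filter_upwards [ae_restrict_mem measurableSet_Ioc] with s hs
  exact hμ.nonneg s hs.1.le

theorem densityMeasure_Iic_ne_top (hμ : IsWeakTraceClass μ K) {t : ℝ} (ht : 0 ≤ t) :
    densityMeasure μ (Iic t) ≠ ∞ := by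
  simp [hμ.densityMeasure_Iic ht]

theorem gFn_apply (hμ : IsWeakTraceClass μ K) {t : ℝ} (ht : 0 < t) :
    gFn μ t = (densityMeasure μ).real (Iic t) / Real.log (1 + t) := by
  rw [gFn, if_pos ht, measureReal_def, hμ.densityMeasure_Iic ht.le,
    ENNReal.toReal_ofReal (hμ.integral_nonneg ht.le)]

theorem gFn_nonneg (hμ : IsWeakTraceClass μ K) (t : ℝ) : 0 ≤ gFn μ t := by
  unfold gFn
  split_ifs with ht
  · exact div_nonneg (hμ.integral_nonneg ht.le) (Real.log_nonneg (by linarith))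
  · exact le_rfl

theorem gFn_mem_boundedMeasurable (hμ : IsWeakTraceClass μ K) : gFn μ ∈ boundedMeasurable := by
  constructor
  · have gFn_eq : gFn μ = fun t => if 0 < t then
        (densityMeasure μ (Iic t)).toReal / Real.log (1 + t) else 0 := by
      ext t
      split_ifs with ht
      · exact hμ.gFn_apply ht
      · exact if_neg ht
    have distribution_mono : Monotone fun t => densityMeasure μ (Iic t) :=
      fun _ _ h => measure_mono (Iic_subset_Iic.2 h)
    rw [gFn_eq]
    exact (distribution_mono.measurable.ennreal_toReal.div (by fun_prop)).ite measurableSet_Ioi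
      measurable_const
  · refine ⟨K, fun t => ?_⟩
    rw [abs_of_nonneg (hμ.gFn_nonneg t), gFn]
    split_ifs with ht
    · exact (div_le_iff₀ (Real.log_pos (by linarith))).2 (hμ.integral_le t ht)
    · exact hμ.const_nonneg

theorem integral_exp_logMeasure (hμ : IsWeakTraceClass μ K) {r : ℝ} (hr : 0 < r) :
    ∫ u, Real.exp (-(u / r)) ∂logMeasure μ = ∫ s in Ioi 0, μ s ^ (1 + 1 / r) := by
  rw [logMeasure, integral_map hμ.aemeasurable_neg_log (by fun_prop), densityMeasure,
    integral_withDensity_eq_integral_toReal_smul₀ hμ.aemeasurable.ennreal_ofReal (by simp)]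
  refine setIntegral_congr_fun measurableSet_Ioi fun s hs => ?_
  have hs0 := hμ.nonneg s (le_of_lt hs)
  simp only [ENNReal.toReal_ofReal hs0, smul_eq_mul]
  rcases hs0.eq_or_lt with h | h
  · rw [← h, zero_mul, Real.zero_rpow (by positivity)]
  · rw [Real.rpow_add h, Real.rpow_one, Real.rpow_def_of_pos h]
    ring_nf

theorem zetaFn_eq_dilationAverage (hμ : IsWeakTraceClass μ K) :
    zetaFn μ = dilationAverage (logMeasure μ) (expKernel 1 one_pos) := by
  ext t
  unfold zetaFn dilationAverage
  split_ifs with ht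
  · rw [← hμ.integral_exp_logMeasure (one_pos.trans (one_lt_log_of_exp_one_lt ht))]
    simp [expKernel]
  · rfl

theorem logMeasure_Iio (hμ : IsWeakTraceClass μ K) (u : ℝ) :
    logMeasure μ (Iio u) = densityMeasure μ {s | -Real.log (μ s) < u} :=
  Measure.map_apply_of_aemeasurable hμ.aemeasurable_neg_log measurableSet_Iio

theorem eventually_logMeasure_Iio_le (hμ : IsWeakTraceClass μ K) {a : ℝ} (ha : 1 < a) :
    ∀ᶠ u in atTop, logMeasure μ (Iio u) ≤ densityMeasure μ (Iic (Real.exp (a * u))) := by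
  have ha0 : 0 < a := one_pos.trans ha
  obtain ⟨s₀, hs₀⟩ := eventually_atTop.1 (hμ.eventually_apply_le_rpow (inv_lt_one_of_one_lt₀ ha))
  filter_upwards [(Real.tendsto_exp_atTop.comp (tendsto_id.const_mul_atTop ha0)).eventually_ge_atTop
    s₀] with u hu
  rw [hμ.logMeasure_Iio]
  refine measure_mono_ae (hμ.ae_densityMeasure_pos.mono fun s ⟨hs, hμs⟩ hsu => ?_)
  refine le_of_not_gt fun hus : Real.exp (a * u) < s => ?_
  have decay : Real.log (μ s) ≤ -a⁻¹ * Real.log s := by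
    rw [← Real.log_rpow hs]
    exact Real.log_le_log hμs (hs₀ s (hu.trans hus.le))
  have log_gt : a * u < Real.log s := (Real.lt_log_iff_exp_lt hs).2 hus
  have : u < a⁻¹ * Real.log s := by rwa [← div_eq_inv_mul, lt_div_iff₀' ha0]
  have hsu : -Real.log (μ s) < u := hsu
  linarith

theorem densityMeasure_Iic_inter_le (hμ : IsWeakTraceClass μ K) {c : ℝ} (hc : 0 ≤ c) (t : ℝ) :
    densityMeasure μ (Iic t ∩ {s | μ s ≤ c}) ≤ ENNReal.ofReal (c * t) := by
  have null_meas : NullMeasurableSet (Iic t ∩ {s | μ s ≤ c})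
      ((volume : Measure ℝ).restrict (Ioi 0)) :=
    measurableSet_Iic.nullMeasurableSet.inter (hμ.aemeasurable.nullMeasurable measurableSet_Iic)
  calc densityMeasure μ (Iic t ∩ {s | μ s ≤ c})
      = ∫⁻ s in Iic t ∩ {s | μ s ≤ c}, ENNReal.ofReal (μ s)
          ∂(volume : Measure ℝ).restrict (Ioi 0) := withDensity_apply' _ _
    _ ≤ ∫⁻ _ in Iic t ∩ {s | μ s ≤ c}, ENNReal.ofReal c
          ∂(volume : Measure ℝ).restrict (Ioi 0) :=
        lintegral_mono_ae <| (ae_restrict_mem₀ null_meas).mono fun s hs =>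
          ENNReal.ofReal_le_ofReal hs.2
    _ ≤ ENNReal.ofReal c * (volume : Measure ℝ).restrict (Ioi 0) (Iic t) := by
        rw [setLIntegral_const]
        gcongr
        exact inter_subset_left
    _ = ENNReal.ofReal (c * t) := by
        rw [Measure.restrict_apply measurableSet_Iic, Iic_inter_Ioi, Real.volume_Ioc, sub_zero,
          ENNReal.ofReal_mul hc]

theorem densityMeasure_Iic_exp_le (hμ : IsWeakTraceClass μ K) (u : ℝ) :
    densityMeasure μ (Iic (Real.exp u)) ≤ logMeasure μ (Iio u) + 1 := by
  have cover : Iic (Real.exp u) ⊆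
      {s | -Real.log (μ s) < u} ∪ Iic (Real.exp u) ∩ {s | μ s ≤ Real.exp (-u)} := by
    intro s hs
    rcases lt_or_ge (-Real.log (μ s)) u with h | h
    · exact .inl h
    · exact .inr ⟨hs, (Real.le_exp_log _).trans (Real.exp_le_exp.2 (le_neg.1 h))⟩
  calc densityMeasure μ (Iic (Real.exp u))
      ≤ densityMeasure μ {s | -Real.log (μ s) < u} +
          densityMeasure μ (Iic (Real.exp u) ∩ {s | μ s ≤ Real.exp (-u)}) :=
        (measure_mono cover).trans (measure_union_le _ _)
    _ ≤ logMeasure μ (Iio u) + ENNReal.ofReal (Real.exp (-u) * Real.exp u) := by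
        rw [hμ.logMeasure_Iio]
        gcongr
        exact hμ.densityMeasure_Iic_inter_le (Real.exp_nonneg _) _
    _ = logMeasure μ (Iio u) + 1 := by simp [← Real.exp_add]

theorem hasLinearGrowth_logMeasure (hμ : IsWeakTraceClass μ K) :
    HasLinearGrowth (logMeasure μ) where
  ae_nonneg := by
    rw [logMeasure, ae_map_iff hμ.aemeasurable_neg_log measurableSet_Ici]
    filter_upwards [hμ.ae_densityMeasure_pos] with s hs
    exact neg_nonneg.2 (Real.log_nonpos hs.2.le (hμ.le_one s hs.1.le))
  exists_measure_Iio_le := by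
    obtain ⟨u₀, hu₀, h⟩ := ((eventually_ge_atTop 0).and
      (eventually_forall_ge_atTop.2 (hμ.eventually_logMeasure_Iio_le one_lt_two))).exists
    have hK := hμ.const_nonneg
    refine ⟨(2 * K * (1 + u₀)).toNNReal, fun r hr => ?_⟩
    set m := max r u₀
    have hm : 0 ≤ m := hr.trans (le_max_left _ _)
    have integral_le : ∫ s in (0 : ℝ)..Real.exp (2 * m), μ s ≤ 2 * K * (1 + u₀) * (1 + r) :=
      calc _ ≤ K * Real.log (1 + Real.exp (2 * m)) := hμ.integral_le _ (Real.exp_pos _)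
        _ ≤ K * (1 + 2 * m) := by
            gcongr
            exact (log_one_add_le (Real.one_le_exp (mul_nonneg zero_le_two hm))).trans_eq (by simp)
        _ ≤ K * (2 * ((1 + u₀) * (1 + r))) := by
            gcongr
            rcases max_choice r u₀ with hmax | hmax <;> nlinarith
        _ = 2 * K * (1 + u₀) * (1 + r) := by ring
    calc logMeasure μ (Iio r) ≤ logMeasure μ (Iio m) :=
          measure_mono (Iio_subset_Iio (le_max_left _ _))
      _ ≤ densityMeasure μ (Iic (Real.exp (2 * m))) := h m (le_max_right _ _)
      _ = ENNReal.ofReal (∫ s in (0 : ℝ)..Real.exp (2 * m), μ s) :=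
          hμ.densityMeasure_Iic (Real.exp_nonneg _)
      _ ≤ ENNReal.ofReal (2 * K * (1 + u₀) * (1 + r)) := ENNReal.ofReal_le_ofReal integral_le
      _ = ENNReal.ofReal (2 * K * (1 + u₀)) * ENNReal.ofReal (1 + r) :=
          ENNReal.ofReal_mul (by positivity)

theorem logMeasure_Iio_ne_top (hμ : IsWeakTraceClass μ K) {u : ℝ} (hu : 0 ≤ u) :
    logMeasure μ (Iio u) ≠ ∞ := by
  obtain ⟨C, hC⟩ := hμ.hasLinearGrowth_logMeasure.exists_measure_Iio_le
  exact ((hC u hu).trans_lt (ENNReal.mul_lt_top ENNReal.coe_lt_top ENNReal.ofReal_lt_top)).ne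

theorem gFn_le_average_add (hμ : IsWeakTraceClass μ K) {t : ℝ} (ht : Real.exp 1 < t) :
    gFn μ t ≤ dilationAverage (logMeasure μ) (stepKernel 1) t + (Real.log t)⁻¹ := by
  have ht0 : 0 < t := (Real.exp_pos 1).trans ht
  have hlog : 0 < Real.log t := one_pos.trans (one_lt_log_of_exp_one_lt ht)
  have hfin := hμ.logMeasure_Iio_ne_top hlog.le
  have real_le : (densityMeasure μ).real (Iic t) ≤ (logMeasure μ).real (Iio (Real.log t)) + 1 := by
    have h := hμ.densityMeasure_Iic_exp_le (Real.log t)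
    rw [Real.exp_log ht0] at h
    simpa [measureReal_def, ENNReal.toReal_add hfin] using
      ENNReal.toReal_mono (ENNReal.add_ne_top.2 ⟨hfin, ENNReal.one_ne_top⟩) h
  rw [hμ.gFn_apply ht0, dilationAverage_stepKernel _ ht, ← one_div, ← add_div]
  gcongr
  linarith

theorem eventually_average_le (hμ : IsWeakTraceClass μ K) {a : ℝ} (ha : 1 < a) :
    ∀ᶠ t in atTop, dilationAverage (logMeasure μ) (stepKernel 1) t ≤
      (2 * a - 1) * gFn μ (t ^ a) := by
  filter_upwards [eventually_gt_atTop (Real.exp 1),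
    Real.tendsto_log_atTop.eventually (hμ.eventually_logMeasure_Iio_le ha),
    (tendsto_inv_atTop_zero.comp Real.tendsto_log_atTop).eventually_le_const (sub_pos.2 ha)]
    with t ht hσ hinv
  have ht0 : 0 < t := (Real.exp_pos 1).trans ht
  have hlog : 0 < Real.log t := one_pos.trans (one_lt_log_of_exp_one_lt ht)
  have hta : 1 ≤ t ^ a := Real.one_le_rpow (by linarith [Real.add_one_le_exp 1]) (by linarith)
  have hlog_ta : 0 < Real.log (1 + t ^ a) := Real.log_pos (by linarith)
  rw [← Real.log_rpow ht0, Real.exp_log (by positivity)] at hσ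
  have log_ratio : Real.log (1 + t ^ a) / Real.log t ≤ 2 * a - 1 :=
    calc Real.log (1 + t ^ a) / Real.log t ≤ (1 + a * Real.log t) / Real.log t := by
          gcongr
          rw [← Real.log_rpow ht0]
          exact log_one_add_le hta
      _ = (Real.log t)⁻¹ + a := by field_simp
      _ ≤ 2 * a - 1 := by linarith [show (Real.log t)⁻¹ ≤ a - 1 from hinv]
  calc dilationAverage (logMeasure μ) (stepKernel 1) t
      = (logMeasure μ).real (Iio (Real.log t)) / Real.log t := dilationAverage_stepKernel _ ht
    _ ≤ (densityMeasure μ).real (Iic (t ^ a)) / Real.log t := by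
        gcongr
        exact ENNReal.toReal_mono (hμ.densityMeasure_Iic_ne_top (by positivity)) hσ
    _ = Real.log (1 + t ^ a) / Real.log t * gFn μ (t ^ a) := by
        rw [hμ.gFn_apply (by positivity)]
        field_simp
    _ ≤ (2 * a - 1) * gFn μ (t ^ a) := by
        gcongr
        exact hμ.gFn_nonneg _

theorem map_gFn_eq_map_average (hμ : IsWeakTraceClass μ K) {ω : (ℝ → ℝ) →ₗ[ℝ] ℝ}
    (hω : IsPowerInvariantLimit ω) :
    ω (gFn μ) = ω (dilationAverage (logMeasure μ) (stepKernel 1)) := by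
  have hg := hμ.gFn_mem_boundedMeasurable
  have hB := hμ.hasLinearGrowth_logMeasure.dilationAverage_mem_boundedMeasurable (stepKernel 1)
  apply le_antisymm
  · refine hω.le_of_eventually_le_add hg hB fun ε hε => ?_
    filter_upwards [eventually_gt_atTop (Real.exp 1),
      (tendsto_inv_atTop_zero.comp Real.tendsto_log_atTop).eventually_le_const hε] with t ht hinv
    exact (hμ.gFn_le_average_add ht).trans (add_le_add_right hinv _)
  · have average_le {a : ℝ} (ha : 1 < a) :
        ω (dilationAverage (logMeasure μ) (stepKernel 1)) ≤ (2 * a - 1) * ω (gFn μ) := by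
      rw [← hω.comp_rpow _ hg a (one_pos.trans ha), ← smul_eq_mul, ← map_smul]
      exact hω.mono hB (boundedMeasurable.smul_mem _ (comp_rpow_mem_boundedMeasurable hg a))
        (hμ.eventually_average_le ha)
    have lim : Tendsto (fun a : ℝ => (2 * a - 1) * ω (gFn μ)) (𝓝[>] 1) (𝓝 (ω (gFn μ))) :=
      ((by fun_prop : Continuous fun a : ℝ => (2 * a - 1) * ω (gFn μ)).tendsto' 1 _
        (by ring)).mono_left nhdsWithin_le_nhds
    exact ge_of_tendsto lim (eventually_mem_nhdsWithin.mono fun a ha => average_le ha)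

end IsWeakTraceClass

theorem dixmier_trace_eq_zeta_residue_general (μ : ℝ → ℝ)
    (hμ0 : ∀ s : ℝ, 0 ≤ s → 0 ≤ μ s) (hμ1 : ∀ s : ℝ, 0 ≤ s → μ s ≤ 1)
    (hmono : AntitoneOn μ (Ici 0)) (K : ℝ)
    (hint : ∀ t : ℝ, 0 < t → (∫ s in (0:ℝ)..t, μ s) ≤ K * Real.log (1 + t))
    (ω : (ℝ → ℝ) →ₗ[ℝ] ℝ)
    (hlimsup : ∀ f : ℝ → ℝ, Measurable f → BddFun f →
      ω f ≤ limsup f (atTop ⊓ ae ((volume : Measure ℝ).restrict (Ioi 0))))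
    (hpow : ∀ f : ℝ → ℝ, Measurable f → BddFun f →
      ∀ a : ℝ, 0 < a → ω (fun t => f (t ^ a)) = ω f) :
    BddFun (gFn μ) ∧ BddFun (zetaFn μ) ∧ ω (gFn μ) = ω (zetaFn μ) := by
  have hμ : IsWeakTraceClass μ K := ⟨hμ0, hμ1, hmono, hint⟩
  have hω : IsPowerInvariantLimit ω :=
    ⟨fun f hf => hlimsup f hf.1 hf.2, fun f hf => hpow f hf.1 hf.2⟩
  have hσ : HasLinearGrowth (logMeasure μ) := hμ.hasLinearGrowth_logMeasure
  rw [hμ.zetaFn_eq_dilationAverage]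
  exact ⟨hμ.gFn_mem_boundedMeasurable.2, (hσ.dilationAverage_mem_boundedMeasurable _).2,
    (hμ.map_gFn_eq_map_average hω).trans (hσ.map_dilationAverage_expKernel_eq hω).symm⟩

end

/-- **The Dixmier trace as a residue of the zeta function (Theorem 10.6).**
Let `μ : [0,∞) → [0,1]` be nonincreasing with `∫₀^t μ ≤ K log(1+t)` (the singular value
function of a positive `T ∈ L^{(1,∞)}`, `‖T‖ ≤ 1`), and let `ω` be a positive linear
functional on `L∞((0,∞))` lying between the essential liminf and limsup at `+∞` which is
invariant under all dilations `D_c`, all power maps `P^a` and the logarithmic Cesàro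
operator `M`.  Then `g(t) = (1/log(1+t))∫₀^t μ` and `F(t) = (1/log t)∫₀^∞ μ^{1+1/log t}`
are bounded and `ω(g) = ω(F)`. -/
theorem dixmier_trace_eq_zeta_residue (μ : ℝ → ℝ)
    (hμ0 : ∀ s : ℝ, 0 ≤ s → 0 ≤ μ s) (hμ1 : ∀ s : ℝ, 0 ≤ s → μ s ≤ 1)
    (hmono : AntitoneOn μ (Set.Ici 0)) (K : ℝ) (hK : 0 < K)
    (hint : ∀ t : ℝ, 0 < t → (∫ s in (0:ℝ)..t, μ s) ≤ K * Real.log (1 + t))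
    (ω : (ℝ → ℝ) →ₗ[ℝ] ℝ)
    -- ω is positive
    (hpos : ∀ f : ℝ → ℝ, Measurable f → BddFun f →
      (∀ᵐ x ∂((volume : Measure ℝ).restrict (Set.Ioi 0)), 0 ≤ f x) → 0 ≤ ω f)
    -- ω lies between the essential liminf and limsup at +∞
    (hsandwich : ∀ f : ℝ → ℝ, Measurable f → BddFun f →
      liminf f (atTop ⊓ ae ((volume : Measure ℝ).restrict (Set.Ioi 0))) ≤ ω f ∧
        ω f ≤ limsup f (atTop ⊓ ae ((volume : Measure ℝ).restrict (Set.Ioi 0))))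
    -- ω is dilation invariant: ω ∘ D_c = ω for all c > 0
    (hdil : ∀ f : ℝ → ℝ, Measurable f → BddFun f →
      ∀ c : ℝ, 0 < c → ω (fun t => f (t / c)) = ω f)
    -- ω is power invariant: ω ∘ P^a = ω for all a > 0
    (hpow : ∀ f : ℝ → ℝ, Measurable f → BddFun f →
      ∀ a : ℝ, 0 < a → ω (fun t => f (t ^ a)) = ω f)
    -- ω is M-invariant
    (hM : ∀ f : ℝ → ℝ, Measurable f → BddFun f → ω (Mop f) = ω f) :
    BddFun (gFn μ) ∧ BddFun (zetaFn μ) ∧ ω (gFn μ) = ω (zetaFn μ) := by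
  exact dixmier_trace_eq_zeta_residue_general μ hμ0 hμ1 hmono K hint ω
    (fun f hm hb => (hsandwich f hm hb).2) hpow
end
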